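/- Let n ≥ 1 be a natural number and define V(f_n)(x) := (2n/x²)·f_n'(x)² − (2n(n−1)/x³)·f_n'(x)·f_n(x) − (2n(n−1)/x² − 2)·v(f_n)(x) for x > 0. Then V(f_n)(x) ≥ 0 for all x > 0, and the functions x ↦ x^{−2n}·V(f_n)(x) and x ↦ V(f_n)(x) are monotone increasing and positive on the interval (0, j'_{n+1/2,1}), where j'_{n+1/2,1} is the first positive zero of the derivative J_{n+1/2}'. -/

import Mathlib

/-- v h = (deriv h)^2 - (second derivative of h) * h. -/
noncomputable def v (f : ℝ → ℝ) (x : ℝ) : ℝ := (deriv f x) ^ 2 - deriv^[2] f x * f x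

/-- Bessel function of the first kind (for `x > 0`). -/
noncomputable def besselJ (ν : ℝ) (x : ℝ) : ℝ :=
  ∑' k : ℕ, (-1 : ℝ) ^ k / ((Nat.factorial k : ℝ) * Real.Gamma ((k : ℝ) + ν + 1)) *
    (x / 2) ^ (2 * (k : ℝ) + ν)

/-- `fn n x = √(π/2)·x^(n+1/2)·J_(n+1/2)(x)`, via the equivalent recursive definition
`fn 0 = sin`, `fn (n+1) x = ∫_0^x t·fn n t dt`. -/
noncomputable def fn : ℕ → ℝ → ℝ
  | 0 => fun x => Real.sin x
  | n + 1 => fun x => ∫ t in (0:ℝ)..x, t * fn n t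

/-- First positive zero of a function on `(0,∞)`. -/
noncomputable def j1 (g : ℝ → ℝ) : ℝ := sInf {x : ℝ | 0 < x ∧ g x = 0}


open Filter Topology

lemma fn_cont (n : ℕ) : Continuous (fn n) := by
  induction n with
  | zero => exact Real.continuous_sin
  | succ n ih =>
    have h : Continuous (fun t : ℝ => t * fn n t) := continuous_id.mul ih
    exact intervalIntegral.continuous_primitive (fun a b => h.intervalIntegrable a b) 0

lemma fn_succ_deriv (n : ℕ) (x : ℝ) : HasDerivAt (fn (n + 1)) (x * fn n x) x := by
  have h : Continuous (fun t : ℝ => t * fn n t) := continuous_id.mul (fn_cont n)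
  exact intervalIntegral.integral_hasDerivAt_right (h.intervalIntegrable 0 x)
    h.stronglyMeasurable.stronglyMeasurableAtFilter h.continuousAt

lemma fn_zero_val (n : ℕ) : fn n 0 = 0 := by
  cases n with
  | zero => simp [fn]
  | succ n => simp [fn]

lemma fn_zero_eq : fn 0 = Real.sin := rfl

lemma eq_zero_of_deriv (D : ℝ → ℝ) (h0 : D 0 = 0) (h : ∀ x, HasDerivAt D 0 x) (x : ℝ) :
    D x = 0 := by
  rw [← h0]
  exact is_const_of_deriv_eq_zero (fun y => (h y).differentiableAt) (fun y => (h y).deriv) x 0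

lemma fn_one (x : ℝ) : fn 1 x = Real.sin x - x * Real.cos x := by
  have := eq_zero_of_deriv (fun x => fn 1 x - (Real.sin x - x * Real.cos x))
    (by simp [fn_zero_val]) (fun y => by
      have h := (fn_succ_deriv 0 y).sub ((Real.hasDerivAt_sin y).sub
        ((hasDerivAt_id y).mul (Real.hasDerivAt_cos y)))
      refine h.congr_deriv ?_
      simp [fn_zero_eq]) x
  linarith

lemma fn_rec (m : ℕ) (x : ℝ) :
    ∃ d, HasDerivAt (fn m) d x ∧ x * d = (2 * m + 1) * fn m x - fn (m + 1) x := by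
  induction m generalizing x with
  | zero =>
    refine ⟨Real.cos x, Real.hasDerivAt_sin x, ?_⟩
    rw [fn_one, fn_zero_eq]; push_cast; ring
  | succ m ih =>
    refine ⟨_, fn_succ_deriv m x, ?_⟩
    have := eq_zero_of_deriv (fun x => fn (m + 2) x - (2 * m + 3) * fn (m + 1) x + x ^ 2 * fn m x)
      (by simp [fn_zero_val]) (fun y => by
        obtain ⟨d, hd, hd2⟩ := ih y
        have h := ((fn_succ_deriv (m + 1) y).sub
          ((fn_succ_deriv m y).const_mul (2 * (m : ℝ) + 3))).add ((hasDerivAt_pow 2 y).mul hd)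
        refine h.congr_deriv ?_
        push_cast
        linear_combination y * hd2) x
    push_cast
    linarith

lemma fn_bound (n : ℕ) (x : ℝ) (hx : 0 ≤ x) : |fn n x| ≤ x ^ (2 * n + 1) := by
  induction n generalizing x with
  | zero =>
    rw [fn_zero_eq]
    simpa [abs_of_nonneg hx] using Real.abs_sin_le_abs (x := x)
  | succ n ih =>
    have h : Continuous (fun t : ℝ => t * fn n t) := continuous_id.mul (fn_cont n)
    have e : fn (n + 1) x = ∫ t in (0:ℝ)..x, t * fn n t := rfl
    rw [e]
    calc |∫ t in (0:ℝ)..x, t * fn n t| ≤ ∫ t in (0:ℝ)..x, |t * fn n t| :=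
          intervalIntegral.abs_integral_le_integral_abs hx
      _ ≤ ∫ t in (0:ℝ)..x, t ^ (2 * n + 2) := by
          apply intervalIntegral.integral_mono_on hx (h.abs.intervalIntegrable 0 x)
            ((continuous_pow _).intervalIntegrable 0 x)
          intro t ht
          rw [abs_mul, abs_of_nonneg ht.1]
          calc t * |fn n t| ≤ t * t ^ (2 * n + 1) :=
                mul_le_mul_of_nonneg_left (ih t ht.1) ht.1
            _ = t ^ (2 * n + 2) := by ring
      _ = x ^ (2 * n + 3) / (2 * n + 3) := by
          rw [integral_pow]; push_cast; ring_nf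
      _ ≤ x ^ (2 * n + 3) := by
          apply div_le_self (by positivity)
          have : (0 : ℝ) ≤ n := by positivity
          linarith

lemma fn_pos (n : ℕ) (x : ℝ) (hx : 0 < x) (hx1 : x < 1) : 0 < fn n x := by
  induction n generalizing x with
  | zero => exact Real.sin_pos_of_pos_of_le_one hx hx1.le
  | succ n ih =>
    have h : Continuous (fun t : ℝ => t * fn n t) := continuous_id.mul (fn_cont n)
    exact intervalIntegral.intervalIntegral_pos_of_pos_on (h.intervalIntegrable 0 x)
      (fun t ht => mul_pos ht.1 (ih t ht.1 (ht.2.trans hx1))) hx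

lemma mono_of_hasDeriv (F F' : ℝ → ℝ) (h : ∀ x > 0, HasDerivAt F (F' x) x)
    (h0 : ∀ x > 0, 0 ≤ F' x) : MonotoneOn F (Set.Ioi 0) := by
  apply monotoneOn_of_deriv_nonneg (convex_Ioi 0)
  · intro x hx; exact (h x hx).continuousAt.continuousWithinAt
  · intro x hx; rw [interior_Ioi] at hx
    exact (h x hx).differentiableAt.differentiableWithinAt
  · intro x hx; rw [interior_Ioi] at hx
    rw [(h x hx).deriv]; exact h0 x hx

lemma pos_of_hasDeriv (F F' : ℝ → ℝ) (h : ∀ x > 0, HasDerivAt F (F' x) x)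
    (h0 : ∀ x > 0, 0 ≤ F' x) (h1 : ∀ x > 0, x < 1 → 0 < F' x)
    (C : ℝ) (hb : ∀ x > 0, x < 1 → |F x| ≤ C * x) (x : ℝ) (hx : 0 < x) : 0 < F x := by
  have hm := mono_of_hasDeriv F F' h h0
  have hs : StrictMonoOn F (Set.Ioo 0 1) := by
    apply strictMonoOn_of_deriv_pos (convex_Ioo 0 1)
    · intro x hx; exact (h x hx.1).continuousAt.continuousWithinAt
    · intro x hx; rw [interior_Ioo] at hx
      rw [(h x hx.1).deriv]; exact h1 x hx.1 hx.2
  have hn : ∀ y > 0, 0 ≤ F y := by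
    intro y hy
    have ht : Tendsto (fun z : ℝ => -(C * z)) (𝓝[>] 0) (𝓝 0) := by
      have : Tendsto (fun z : ℝ => -(C * z)) (𝓝 0) (𝓝 (-(C * 0))) :=
        (by fun_prop : Continuous (fun z : ℝ => -(C * z))).continuousAt
      simp only [mul_zero, neg_zero] at this
      exact this.mono_left nhdsWithin_le_nhds
    apply le_of_tendsto ht
    have hlt : (0:ℝ) < min y 1 := lt_min hy one_pos
    filter_upwards [Ioo_mem_nhdsGT hlt] with z hz
    have hzy : z < y := hz.2.trans_le (min_le_left _ _)
    have hz1 : z < 1 := hz.2.trans_le (min_le_right _ _)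
    have := (abs_le.mp (hb z hz.1 hz1)).1
    have h2 := hm (show z ∈ Set.Ioi 0 from hz.1) (show y ∈ Set.Ioi 0 from hy) hzy.le
    linarith
  have hp : 0 < min x (1/2) := lt_min hx (by norm_num)
  have hp2 : min x (1/2) ≤ 1/2 := min_le_right _ _
  have a1 := hn (min x (1/2) / 2) (by linarith)
  have a2 := hs (show min x (1/2) / 2 ∈ Set.Ioo (0:ℝ) 1 from ⟨by linarith, by linarith⟩)
    (show min x (1/2) ∈ Set.Ioo (0:ℝ) 1 from ⟨by linarith, by linarith⟩) (by linarith)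
  have a3 := hm (show min x (1/2) ∈ Set.Ioi 0 from hp) (show x ∈ Set.Ioi 0 from hx) (min_le_left _ _)
  linarith

/-- Scaled Turan determinant. -/
noncomputable def SS (m : ℕ) (x : ℝ) : ℝ :=
  (x ^ 2 * fn m x ^ 2 - (2 * m + 1) * (fn m x * fn (m + 1) x) + fn (m + 1) x ^ 2) / x ^ (2 * m + 1)

/-- The function `V` in terms of consecutive `fn`. -/
noncomputable def VV (m : ℕ) (x : ℝ) : ℝ :=
  2 * (m + 1) * fn m x ^ 2 - 2 * (m + 1) * m / x ^ 2 * (fn m x * fn (m + 1) x)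
    - (2 * (m + 1) * m / x ^ 2 - 2) *
      (x ^ 2 * fn m x ^ 2 - 2 * (m + 1) * (fn m x * fn (m + 1) x) + fn (m + 1) x ^ 2)

lemma fn_deriv_pos (m : ℕ) (x : ℝ) (hx : 0 < x) :
    HasDerivAt (fn m) (((2 * m + 1) * fn m x - fn (m + 1) x) / x) x := by
  obtain ⟨d, hd, hd2⟩ := fn_rec m x
  rw [← hd2, mul_div_cancel_left₀ _ hx.ne']
  exact hd

lemma SS_deriv (m : ℕ) (x : ℝ) (hx : 0 < x) :
    HasDerivAt (SS m) (2 * fn m x ^ 2 / x ^ (2 * m)) x := by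
  have ha := fn_deriv_pos m x hx
  have hb := fn_succ_deriv m x
  have h := ((((hasDerivAt_pow 2 x).mul (ha.pow 2)).sub
    ((ha.mul hb).const_mul (2 * (m : ℝ) + 1))).add (hb.pow 2)).div
      (hasDerivAt_pow (2 * m + 1) x) (by positivity)
  refine h.congr_deriv ?_
  simp only [Pi.add_apply, Pi.sub_apply, Pi.mul_apply, Pi.pow_apply]
  push_cast
  field_simp
  ring

lemma WW_deriv (m : ℕ) (x : ℝ) (hx : 0 < x) :
    HasDerivAt (fun x => (x ^ (2 * (m + 1)))⁻¹ * VV m x) (6 * (m + 1) * m / x ^ 4 * SS m x) x := by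
  have ha := fn_deriv_pos m x hx
  have hb := fn_succ_deriv m x
  have hq := ((hasDerivAt_const x (2 * ((m : ℝ) + 1) * m)).div (hasDerivAt_pow 2 x) (by positivity))
  have hVV := (((ha.pow 2).const_mul (2 * ((m : ℝ) + 1))).sub (hq.mul (ha.mul hb))).sub
    ((hq.sub_const 2).mul ((((hasDerivAt_pow 2 x).mul (ha.pow 2)).sub
      ((ha.mul hb).const_mul (2 * ((m : ℝ) + 1)))).add (hb.pow 2)))
  have h := ((hasDerivAt_pow (2 * (m + 1)) x).inv (by positivity)).mul hVV
  refine h.congr_deriv ?_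
  simp only [Pi.add_apply, Pi.sub_apply, Pi.mul_apply, Pi.pow_apply, Pi.div_apply, Pi.inv_apply, SS]
  push_cast
  have e : 2 * (m + 1) - 1 = 2 * m + 1 := by omega
  rw [e]
  field_simp
  ring

lemma SS_pos (m : ℕ) (x : ℝ) (hx : 0 < x) : 0 < SS m x := by
  refine pos_of_hasDeriv (SS m) _ (SS_deriv m) (fun x hx => by positivity)
    (fun x hx hx1 => by have := fn_pos m x hx hx1; positivity) (2 * m + 3) ?_ x hx
  intro x hx hx1
  have ha := fn_bound m x hx.le
  have hb := fn_bound (m + 1) x hx.le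
  rw [SS, abs_div, abs_of_pos (show 0 < x ^ (2 * m + 1) by positivity), div_le_iff₀ (by positivity)]
  have hx2 : x ^ 2 ≤ 1 := by nlinarith
  have hp1 : x ^ (2 * m + 1) ≤ 1 := pow_le_one₀ hx.le hx1.le
  have hb' : |fn (m + 1) x| ≤ x ^ (2 * m + 1) * x ^ 2 := by
    convert hb using 1; ring
  set p := x ^ (2 * m + 1) with hp
  have hp0 : 0 < p := by positivity
  have t1 : fn m x ^ 2 ≤ p ^ 2 := by rw [← sq_abs]; gcongr
  have t2 : |fn m x * fn (m + 1) x| ≤ p * (p * x ^ 2) := by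
    rw [abs_mul]; gcongr
  have t3 : fn (m + 1) x ^ 2 ≤ (p * x ^ 2) ^ 2 := by rw [← sq_abs]; gcongr
  have key : p ^ 2 * x ^ 2 ≤ x * p := by
    have : p * x ≤ 1 := by nlinarith
    nlinarith [mul_pos hp0 hx]
  have t1' : x ^ 2 * fn m x ^ 2 ≤ x * p := by nlinarith [sq_nonneg x]
  have t3' : fn (m + 1) x ^ 2 ≤ x * p := by
    have : p ^ 2 * x ^ 2 * x ^ 2 ≤ p ^ 2 * x ^ 2 := mul_le_of_le_one_right (by positivity) hx2
    nlinarith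
  have t2' : |(2 * (m:ℝ) + 1) * (fn m x * fn (m + 1) x)| ≤ (2 * m + 1) * (x * p) := by
    rw [abs_mul, abs_of_nonneg (by positivity : (0:ℝ) ≤ 2 * m + 1)]
    gcongr
    linarith
  have := abs_le.mp t2'
  have z1 : 0 ≤ x ^ 2 * fn m x ^ 2 := by positivity
  have z3 : 0 ≤ fn (m + 1) x ^ 2 := by positivity
  have z4 : 0 < x * p := by positivity
  rw [abs_le]
  constructor <;> nlinarith

lemma WW_pos (m : ℕ) (x : ℝ) (hx : 0 < x) : 0 < (x ^ (2 * (m + 1)))⁻¹ * VV m x := by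
  rcases Nat.eq_zero_or_pos m with rfl | hm
  · have : VV 0 x = 2 * x ^ 2 := by
      simp only [VV, zero_add, fn_one, fn_zero_eq]
      push_cast
      linear_combination (2 * x ^ 2) * Real.sin_sq_add_cos_sq x
    rw [this]; positivity
  have hm' : (0:ℝ) < m := by exact_mod_cast hm
  refine pos_of_hasDeriv _ _ (WW_deriv m) (fun x hx => ?_)
    (fun x hx hx1 => ?_) (2 * (m + 1) + 2 * (m + 1) * m + (2 * (m + 1) * m + 2) * (2 * m + 4)) ?_ x hx
  · have := SS_pos m x hx; positivity
  · have := SS_pos m x hx; positivity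
  intro x hx hx1
  have ha := fn_bound m x hx.le
  have hb := fn_bound (m + 1) x hx.le
  have hx2 : x ^ 2 ≤ 1 := by nlinarith
  have e1 : x ^ (2 * (m + 1)) = x ^ (2 * m + 1) * x := by ring
  have hb' : |fn (m + 1) x| ≤ x ^ (2 * m + 1) * x ^ 2 := by
    convert hb using 1; ring
  have hp2 : x ^ (2 * m + 1) ≤ x ^ 2 := pow_le_pow_of_le_one hx.le hx1.le (by omega)
  rw [abs_mul, abs_inv, abs_of_pos (show 0 < x ^ (2 * (m + 1)) by positivity),
    inv_mul_le_iff₀ (by positivity), e1]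
  set p := x ^ (2 * m + 1) with hp
  have hp0 : 0 < p := by positivity
  obtain ⟨A, hA⟩ : ∃ A, fn m x = p * A := ⟨fn m x / p, by field_simp⟩
  obtain ⟨B, hB⟩ : ∃ B, fn (m + 1) x = p * x ^ 2 * B := ⟨fn (m + 1) x / (p * x ^ 2), by field_simp⟩
  have hA1 : |A| ≤ 1 := by
    rw [hA, abs_mul, abs_of_pos hp0] at ha
    exact le_of_mul_le_mul_left (by linarith) hp0
  have hB1 : |B| ≤ 1 := by
    have : 0 < p * x ^ 2 := by positivity
    rw [hB, abs_mul, abs_of_pos this] at hb'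
    exact le_of_mul_le_mul_left (by linarith) this
  have eV : VV m x = p ^ 2 * (2 * (m + 1) * A ^ 2 - 2 * (m + 1) * m * (A * B)
      - (2 * (m + 1) * m - 2 * x ^ 2) * (A ^ 2 - 2 * (m + 1) * (A * B) + x ^ 2 * B ^ 2)) := by
    rw [VV, hA, hB]; field_simp
  have hA2 : |A ^ 2| ≤ 1 := by rw [abs_pow]; exact pow_le_one₀ (abs_nonneg _) hA1
  have hB2 : |x ^ 2 * B ^ 2| ≤ 1 := by
    rw [abs_mul, abs_pow B, abs_of_nonneg (sq_nonneg x)]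
    exact mul_le_one₀ hx2 (by positivity) (pow_le_one₀ (abs_nonneg _) hB1)
  have hAB : |A * B| ≤ 1 := by
    rw [abs_mul]; exact mul_le_one₀ hA1 (by positivity) hB1
  have hq : |A ^ 2 - 2 * ((m:ℝ) + 1) * (A * B) + x ^ 2 * B ^ 2| ≤ 2 * (m:ℝ) + 4 := by
    rw [abs_le] at hA2 hAB hB2 ⊢
    constructor <;> nlinarith
  have hc : |2 * ((m:ℝ) + 1) * m - 2 * x ^ 2| ≤ 2 * ((m:ℝ) + 1) * m + 2 := by
    have : 0 ≤ 2 * ((m:ℝ) + 1) * m := by positivity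
    rw [abs_le]
    constructor <;> nlinarith [sq_nonneg x]
  have hcq := mul_le_mul hc hq (abs_nonneg _) (by positivity)
  rw [← abs_mul] at hcq
  have h1 : |2 * ((m:ℝ) + 1) * A ^ 2| ≤ 2 * ((m:ℝ) + 1) := by
    rw [abs_mul, abs_of_pos (by positivity : 0 < 2 * ((m:ℝ) + 1))]
    exact mul_le_of_le_one_right (by positivity) hA2
  have h2 : |2 * ((m:ℝ) + 1) * m * (A * B)| ≤ 2 * ((m:ℝ) + 1) * m := by
    rw [abs_mul, abs_of_pos (by positivity : 0 < 2 * ((m:ℝ) + 1) * m)]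
    exact mul_le_of_le_one_right (by positivity) hAB
  rw [eV, abs_mul, abs_of_pos (by positivity : 0 < p ^ 2)]
  have h3 := (abs_sub _ _).trans (add_le_add ((abs_sub _ _).trans (add_le_add h1 h2)) hcq)
  have h4 : p ^ 2 ≤ p * x * x := by nlinarith
  calc _ ≤ (p * x * x) * (2 * (m + 1) + 2 * (m + 1) * m + (2 * (m + 1) * m + 2) * (2 * m + 4)) := by
        gcongr
    _ = _ := by ring

theorem stmt_18 (n : ℕ) (hn : 1 ≤ n) (V' : ℝ → ℝ)
    (hV : ∀ x > (0 : ℝ), V' x =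
      2 * (n : ℝ) / x ^ 2 * (deriv (fn n) x) ^ 2 -
        2 * (n : ℝ) * ((n : ℝ) - 1) / x ^ 3 * (deriv (fn n) x * fn n x) -
        (2 * (n : ℝ) * ((n : ℝ) - 1) / x ^ 2 - 2) * v (fn n) x) :
    (∀ x > (0 : ℝ), 0 ≤ V' x) ∧
    MonotoneOn (fun x => (x ^ (2 * n))⁻¹ * V' x)
      (Set.Ioo (0 : ℝ) (j1 (deriv (besselJ ((n : ℝ) + 1 / 2))))) ∧
    (∀ x ∈ Set.Ioo (0 : ℝ) (j1 (deriv (besselJ ((n : ℝ) + 1 / 2)))),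
      0 < (x ^ (2 * n))⁻¹ * V' x) ∧
    MonotoneOn V' (Set.Ioo (0 : ℝ) (j1 (deriv (besselJ ((n : ℝ) + 1 / 2))))) ∧
    (∀ x ∈ Set.Ioo (0 : ℝ) (j1 (deriv (besselJ ((n : ℝ) + 1 / 2)))), 0 < V' x) := by
  obtain ⟨m, rfl⟩ : ∃ m, n = m + 1 := ⟨n - 1, by omega⟩
  have hVV : ∀ x > (0:ℝ), V' x = VV m x := by
    intro x hx
    have hd : deriv (fn (m + 1)) = fun y => y * fn m y := funext fun y => (fn_succ_deriv m y).deriv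
    have hd2 : deriv (fun y => y * fn m y) x = (2 * m + 2) * fn m x - fn (m + 1) x := by
      have h := (hasDerivAt_id x).mul (fn_deriv_pos m x hx)
      refine (h.congr_deriv ?_).deriv
      simp only [id]
      field_simp
      ring
    rw [hV x hx, v, Function.iterate_succ, Function.iterate_one, Function.comp, hd, hd2, VV]
    push_cast
    field_simp
    ring
  have hWW : ∀ x > (0:ℝ), 0 < (x ^ (2 * (m + 1)))⁻¹ * V' x := by
    intro x hx; rw [hVV x hx]; exact WW_pos m x hx
  have hVpos : ∀ x > (0:ℝ), 0 < V' x := by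
    intro x hx
    exact pos_of_mul_pos_right (hWW x hx) (by positivity)
  have hmono : MonotoneOn (fun x => (x ^ (2 * (m + 1)))⁻¹ * V' x) (Set.Ioi 0) := by
    have h := mono_of_hasDeriv _ _ (WW_deriv m)
      (fun x hx => by have := SS_pos m x hx; positivity)
    exact h.congr (fun x hx => by simp only [hVV x hx])
  have hmono2 : MonotoneOn V' (Set.Ioi 0) := by
    intro x hx y hy hxy
    have hx' : 0 < x := hx
    have hy' : 0 < y := hy
    have h := hmono hx hy hxy
    have h2 : x ^ (2 * (m + 1)) ≤ y ^ (2 * (m + 1)) := by gcongr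
    have h3 := mul_le_mul h2 h (hWW x hx).le (by positivity)
    simp only at h3
    rwa [mul_inv_cancel_left₀ (by positivity), mul_inv_cancel_left₀ (by positivity)] at h3
  exact ⟨fun x hx => (hVpos x hx).le, hmono.mono (fun x hx => hx.1), fun x hx => hWW x hx.1,
    hmono2.mono (fun x hx => hx.1), fun x hx => hVpos x hx.1⟩
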